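/- The one-step rewrite relation → of the name algebra is locally confluent: for all terms a, b, c, if a → b and a → c, then there exists a term d such that b →* d and c →* d. -/

import Mathlib

/-- Terms of the name algebra over atoms in ℕ. -/
inductive Term : Type
  | var : ℕ → Term
  | projL : Term → Term
  | projR : Term → Term
  | join : Term → Term → Term
deriving DecidableEq

/-- One-step rewrite relation: the three rules `(u ∧ v).l → u`, `(u ∧ v).r → v`,
`(u.l ∧ u.r) → u`, closed under all term contexts. -/
inductive Step : Term → Term → Prop
  | splitL (u v : Term) : Step (Term.projL (Term.join u v)) u
  | splitR (u v : Term) : Step (Term.projR (Term.join u v)) v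
  | merge (u : Term) : Step (Term.join (Term.projL u) (Term.projR u)) u
  | congL {a b : Term} : Step a b → Step (Term.projL a) (Term.projL b)
  | congR {a b : Term} : Step a b → Step (Term.projR a) (Term.projR b)
  | congJoinL {a b : Term} (v : Term) : Step a b → Step (Term.join a v) (Term.join b v)
  | congJoinR {a b : Term} (u : Term) : Step a b → Step (Term.join u a) (Term.join u b)

/-- Reflexive-transitive closure of `Step`. -/
def Steps : Term → Term → Prop := Relation.ReflTransGen Step

/-- A term is in normal form if no rewrite step applies to it. -/
def NormalForm (n : Term) : Prop := ¬ ∃ m, Step n m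

/-- `u ≈ v` : the normal forms of `u` and `v` coincide, i.e. they reach a common normal form. -/
def TermEquiv (u v : Term) : Prop := ∃ n, NormalForm n ∧ Steps u n ∧ Steps v n

/-!
Two steps out of the same term that act on disjoint subterms commute, and two steps inside the same
immediate subterm are joined by induction. Otherwise one of them contracts the root. If the other
acts inside a variable of the root rule, it is matched on the other side by the same step (or by
none, if a split discards the subterm); as `merge` contains its variable twice, the second copy has
to be rewritten as well before merging. The remaining critical pairs come from `(u.l ∧ u.r).l` and
`(u.l ∧ u.r).r`, whose two reducts coincide, and from `(u ∧ v).l ∧ (u ∧ v).r`, where a split on one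
side is completed to `u ∧ v` by the split on the other.
-/

open Relation

/-- Two terms are joinable if they rewrite to a common term. -/
abbrev Joinable : Term → Term → Prop := Join Steps

theorem join_reflTransGen_lift {α β : Type*} {r : α → α → Prop} {s : β → β → Prop} {a b : α}
    (f : α → β) (hf : ∀ x y, r x y → s (f x) (f y)) (h : Join (ReflTransGen r) a b) :
    Join (ReflTransGen s) (f a) (f b) := by
  obtain ⟨c, hac, hbc⟩ := h
  exact ⟨f c, ReflTransGen.lift f hf _ _ hac, ReflTransGen.lift f hf _ _ hbc⟩

namespace Step

variable {a b c u v : Term}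

theorem joinable_of_projL_join (h : Step (.projL (.join u v)) c) : Joinable u c := by
  cases h with
  | splitL => exact ⟨_, .refl, .refl⟩
  | congL h =>
    cases h with
    | merge => exact ⟨_, .refl, .refl⟩
    | congJoinL _ hu => exact ⟨_, .single hu, .single (.splitL _ _)⟩
    | congJoinR _ _ => exact ⟨_, .refl, .single (.splitL _ _)⟩

theorem joinable_of_projR_join (h : Step (.projR (.join u v)) c) : Joinable v c := by
  cases h with
  | splitR => exact ⟨_, .refl, .refl⟩
  | congR h =>
    cases h with
    | merge => exact ⟨_, .refl, .refl⟩
    | congJoinL _ _ => exact ⟨_, .refl, .single (.splitR _ _)⟩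
    | congJoinR _ hv => exact ⟨_, .single hv, .single (.splitR _ _)⟩

theorem joinable_of_join_projL_projR (h : Step (.join (.projL u) (.projR u)) c) :
    Joinable u c := by
  cases h with
  | merge => exact ⟨_, .refl, .refl⟩
  | congJoinL _ h =>
    cases h with
    | splitL => exact ⟨_, .refl, .single (.congJoinR _ (.splitR _ _))⟩
    | congL hu => exact ⟨_, .single hu, .tail (.single (.congJoinR _ (.congR hu))) (.merge _)⟩
  | congJoinR _ h =>
    cases h with
    | splitR => exact ⟨_, .refl, .single (.congJoinL _ (.splitL _ _))⟩
    | congR hu => exact ⟨_, .single hu, .tail (.single (.congJoinL _ (.congL hu))) (.merge _)⟩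

theorem joinable_projL (hab : Step a b) (ih : ∀ c, Step a c → Joinable b c)
    (h : Step (.projL a) c) : Joinable (.projL b) c := by
  cases h with
  | splitL => exact symm (joinable_of_projL_join (.congL hab))
  | congL hac => exact join_reflTransGen_lift Term.projL (fun _ _ => .congL) (ih _ hac)

theorem joinable_projR (hab : Step a b) (ih : ∀ c, Step a c → Joinable b c)
    (h : Step (.projR a) c) : Joinable (.projR b) c := by
  cases h with
  | splitR => exact symm (joinable_of_projR_join (.congR hab))
  | congR hac => exact join_reflTransGen_lift Term.projR (fun _ _ => .congR) (ih _ hac)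

theorem joinable_join_left (hab : Step a b) (ih : ∀ c, Step a c → Joinable b c)
    (h : Step (.join a v) c) : Joinable (.join b v) c := by
  cases h with
  | merge => exact symm (joinable_of_join_projL_projR (.congJoinL _ hab))
  | congJoinL _ hac =>
    exact join_reflTransGen_lift (Term.join · v) (fun _ _ => .congJoinL v) (ih _ hac)
  | congJoinR _ hv => exact ⟨_, .single (.congJoinR _ hv), .single (.congJoinL _ hab)⟩

theorem joinable_join_right (hab : Step a b) (ih : ∀ c, Step a c → Joinable b c)
    (h : Step (.join u a) c) : Joinable (.join u b) c := by
  cases h with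
  | merge => exact symm (joinable_of_join_projL_projR (.congJoinR _ hab))
  | congJoinL _ hu => exact ⟨_, .single (.congJoinL _ hu), .single (.congJoinR _ hab)⟩
  | congJoinR _ hac =>
    exact join_reflTransGen_lift (Term.join u) (fun _ _ => .congJoinR u) (ih _ hac)

end Step

/-- The rewrite relation of the name algebra is locally confluent. -/
theorem step_locally_confluent :
    ∀ a b c : Term, Step a b → Step a c → ∃ d, Steps b d ∧ Steps c d := by
  intro a b c hab
  induction hab generalizing c with
  | splitL u v => exact Step.joinable_of_projL_join
  | splitR u v => exact Step.joinable_of_projR_join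
  | merge u => exact Step.joinable_of_join_projL_projR
  | congL hab ih => exact hab.joinable_projL ih
  | congR hab ih => exact hab.joinable_projR ih
  | congJoinL v hab ih => exact hab.joinable_join_left ih
  | congJoinR u hab ih => exact hab.joinable_join_right ih
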